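/- arXiv:2302.03686 — 6 statements merged into one kernel-verified Lean document; each statement's English description precedes it below -/
import Mathlib

section
/- Let p and q be strictly positive probability mass functions on a nonempty finite type α, let T > 0, and let b ∈ ℝ. Define the LHTS loss L_b(q) = -∑_x p(x) · exp(((1-T)/T)·log p(x) - b) · log q(x). Then (e^b / Z_{p_T}) · L_b(q) = KL(p_T ‖ q) + H(p_T). -/
/-- **LHTS loss identity.** For strictly positive pmfs `p` and `q` on a nonempty finite
type, temperature `T > 0` and baseline `b`, the scaled LHTS loss
`(e^b / Z_{p_T}) · L_b(q)` equals `KL(p_T ‖ q) + H(p_T)`, where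
`p_T x = p x ^ (1/T) / Z_{p_T}` and `Z_{p_T} = ∑ y, p y ^ (1/T)`. -/
theorem lhts_loss_eq_kl_add_entropy
    {α : Type*} [Fintype α] [Nonempty α]
    (p q : α → ℝ) (hp : ∀ x, 0 < p x) (hq : ∀ x, 0 < q x)
    (hp1 : ∑ x, p x = 1) (hq1 : ∑ x, q x = 1)
    (T : ℝ) (hT : 0 < T) (b : ℝ) :
    (Real.exp b / ∑ y, p y ^ (1 / T)) *
        (-(∑ x, p x * Real.exp ((1 - T) / T * Real.log (p x) - b) * Real.log (q x)))
      = (∑ x, (p x ^ (1 / T) / ∑ y, p y ^ (1 / T)) *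
            Real.log ((p x ^ (1 / T) / ∑ y, p y ^ (1 / T)) / q x))
        + (-(∑ x, (p x ^ (1 / T) / ∑ y, p y ^ (1 / T)) *
            Real.log (p x ^ (1 / T) / ∑ y, p y ^ (1 / T)))) := by
  have hZ : 0 < ∑ y, p y ^ (1 / T) :=
    Finset.sum_pos (fun y _ => Real.rpow_pos_of_pos (hp y) _) Finset.univ_nonempty
  generalize (∑ y, p y ^ (1 / T)) = Z at hZ ⊢
  rw [← sub_eq_add_neg, ← Finset.sum_sub_distrib, ← Finset.sum_neg_distrib, Finset.mul_sum]
  refine Finset.sum_congr rfl fun x _ => ?_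
  have hpx : 0 < p x ^ (1 / T) := Real.rpow_pos_of_pos (hp x) _
  rw [Real.log_div (div_pos hpx hZ).ne' (hq x).ne']
  have key : p x ^ (1 / T) =
      Real.exp b * (p x * Real.exp ((1 - T) / T * Real.log (p x) - b)) := by
    rw [Real.rpow_def_of_pos (hp x)]
    nth_rewrite 2 [← Real.exp_log (hp x)]
    rw [← Real.exp_add, ← Real.exp_add]
    congr 1
    field_simp
    ring
  generalize Real.log (p x ^ (1 / T) / Z) = l
  rw [key]
  ring
end

section
/- Let p be a strictly positive probability mass function on a nonempty finite type α, let T > 0, and let b ∈ ℝ. Define the LHTS loss L_b(q) = -∑_x p(x) · exp(((1-T)/T)·log p(x) - b) · log q(x) over strictly positive pmfs q on α. Then L_b is a strictly proper loss: for every strictly positive pmf q, L_b(q) ≥ L_b(p_T), with equality if and only if q = p_T. -/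
theorem gibbs_pt (r q : ℝ) (hr : 0 < r) (hq : 0 < q) :
    0 ≤ r * Real.log r - r * Real.log q + (q - r) ∧
    (r * Real.log r - r * Real.log q + (q - r) = 0 → q = r) := by
  have e : Real.log (q / r) = Real.log q - Real.log r := Real.log_div hq.ne' hr.ne'
  have e2 : r * (q / r - 1) = q - r := by field_simp
  have hqr : 0 < q / r := by positivity
  constructor
  · have h := mul_le_mul_of_nonneg_left (Real.log_le_sub_one_of_pos hqr) hr.le
    rw [e2, e] at h
    linarith
  · intro h0
    by_contra hne
    have h := mul_lt_mul_of_pos_left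
      (Real.log_lt_sub_one_of_pos hqr (fun h => hne ((div_eq_one_iff_eq hr.ne').1 h))) hr
    rw [e2, e] at h
    linarith

theorem gibbs_sum {α : Type*} [Fintype α] (r q : α → ℝ) (hr : ∀ x, 0 < r x)
    (hq : ∀ x, 0 < q x) (h1 : ∑ x, q x = ∑ x, r x) :
    ∑ x, r x * Real.log (q x) ≤ ∑ x, r x * Real.log (r x) ∧
    (∑ x, r x * Real.log (q x) = ∑ x, r x * Real.log (r x) → q = r) := by
  have hs : ∑ x, (r x * Real.log (r x) - r x * Real.log (q x) + (q x - r x))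
      = ∑ x, r x * Real.log (r x) - ∑ x, r x * Real.log (q x) := by
    rw [Finset.sum_add_distrib, Finset.sum_sub_distrib, Finset.sum_sub_distrib, h1]
    ring
  have hn : ∀ x ∈ Finset.univ,
      0 ≤ r x * Real.log (r x) - r x * Real.log (q x) + (q x - r x) :=
    fun x _ => (gibbs_pt _ _ (hr x) (hq x)).1
  constructor
  · have := Finset.sum_nonneg hn
    linarith
  · intro h
    have h0 := (Finset.sum_eq_zero_iff_of_nonneg hn).1 (by rw [hs, h, sub_self])
    funext x
    exact (gibbs_pt _ _ (hr x) (hq x)).2 (h0 x (Finset.mem_univ x))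

/-- **Strict properness of the LHTS loss.** For a strictly positive pmf `p` on a nonempty
finite type, `T > 0` and baseline `b ∈ ℝ`, the LHTS loss
`L_b(q) = -∑ x, p x · exp(((1-T)/T)·log p x - b) · log (q x)`
over strictly positive pmfs `q` satisfies `L_b(q) ≥ L_b(p_T)` with equality iff `q = p_T`,
where `p_T x = p x ^ (1/T) / ∑ y, p y ^ (1/T)`. -/
theorem lhts_loss_strictly_proper
    {α : Type*} [Fintype α] [Nonempty α]
    (p : α → ℝ) (hp : ∀ x, 0 < p x) (hp1 : ∑ x, p x = 1)
    (T : ℝ) (hT : 0 < T) (b : ℝ)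
    (q : α → ℝ) (hq : ∀ x, 0 < q x) (hq1 : ∑ x, q x = 1) :
    (-(∑ x, p x * Real.exp ((1 - T) / T * Real.log (p x) - b) * Real.log (q x))
        ≥ -(∑ x, p x * Real.exp ((1 - T) / T * Real.log (p x) - b) *
              Real.log (p x ^ (1 / T) / ∑ y, p y ^ (1 / T))))
    ∧ ((-(∑ x, p x * Real.exp ((1 - T) / T * Real.log (p x) - b) * Real.log (q x))
        = -(∑ x, p x * Real.exp ((1 - T) / T * Real.log (p x) - b) *
              Real.log (p x ^ (1 / T) / ∑ y, p y ^ (1 / T))))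
        ↔ q = fun x => p x ^ (1 / T) / ∑ y, p y ^ (1 / T)) := by
  have hZ : 0 < ∑ y, p y ^ (1 / T) :=
    Finset.sum_pos (fun y _ => Real.rpow_pos_of_pos (hp y) _) Finset.univ_nonempty
  set Z := ∑ y, p y ^ (1 / T) with hZd
  have hw : ∀ x, p x * Real.exp ((1 - T) / T * Real.log (p x) - b)
      = (Real.exp (-b) * Z) * (p x ^ (1 / T) / Z) := by
    intro x
    have e : (Real.exp (-b) * Z) * (p x ^ (1 / T) / Z) = Real.exp (-b) * p x ^ (1 / T) := by
      field_simp
    rw [e, Real.rpow_def_of_pos (hp x), ← Real.exp_add]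
    nth_rewrite 1 [← Real.exp_log (hp x)]
    rw [← Real.exp_add]
    congr 1
    field_simp
    ring
  have hC : 0 < Real.exp (-b) * Z := by positivity
  have hr : ∀ x, 0 < p x ^ (1 / T) / Z := fun x => div_pos (Real.rpow_pos_of_pos (hp x) _) hZ
  have hr1 : ∑ x, p x ^ (1 / T) / Z = 1 := by
    rw [← Finset.sum_div, ← hZd, div_self hZ.ne']
  obtain ⟨g1, g2⟩ := gibbs_sum (fun x => p x ^ (1 / T) / Z) q hr hq (by rw [hq1, hr1])
  simp only [hw, mul_assoc (Real.exp (-b) * Z), ← Finset.mul_sum]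
  refine ⟨neg_le_neg (mul_le_mul_of_nonneg_left g1 hC.le), fun h => ?_, fun h => ?_⟩
  · exact g2 (mul_left_cancel₀ hC.ne' (neg_injective h))
  · rw [h]
end

section
/- Let p be a strictly positive probability mass function on a nonempty finite type α, let T > 0, and let b ∈ ℝ. Define the LHTS loss L_b(q) = -∑_x p(x) · exp(((1-T)/T)·log p(x) - b) · log q(x). Then for any two strictly positive pmfs q₁ and q₂ on α, L_b(q₁) ≤ L_b(q₂) if and only if KL(p_T ‖ q₁) ≤ KL(p_T ‖ q₂); i.e., minimizing the LHTS loss is equivalent to minimizing the KL divergence from the temperature-scaled distribution. -/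
/-- **Minimizing the LHTS loss is equivalent to minimizing KL from `p_T`.**
For a strictly positive pmf `p` on a nonempty finite type, `T > 0`, `b ∈ ℝ`, and any two
strictly positive pmfs `q₁`, `q₂`:
`L_b(q₁) ≤ L_b(q₂) ↔ KL(p_T ‖ q₁) ≤ KL(p_T ‖ q₂)`, where
`L_b(q) = -∑ x, p x · exp(((1-T)/T)·log p x - b) · log (q x)`,
`p_T x = p x ^ (1/T) / ∑ y, p y ^ (1/T)` and `KL(r ‖ q) = ∑ x, r x · log (r x / q x)`. -/
theorem lhts_loss_order_iff_kl_order
    {α : Type*} [Fintype α] [Nonempty α]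
    (p : α → ℝ) (hp : ∀ x, 0 < p x) (hp1 : ∑ x, p x = 1)
    (T : ℝ) (hT : 0 < T) (b : ℝ)
    (q₁ q₂ : α → ℝ) (hq₁ : ∀ x, 0 < q₁ x) (hq₁1 : ∑ x, q₁ x = 1)
    (hq₂ : ∀ x, 0 < q₂ x) (hq₂1 : ∑ x, q₂ x = 1) :
    (-(∑ x, p x * Real.exp ((1 - T) / T * Real.log (p x) - b) * Real.log (q₁ x))
        ≤ -(∑ x, p x * Real.exp ((1 - T) / T * Real.log (p x) - b) * Real.log (q₂ x)))
      ↔ (∑ x, (p x ^ (1 / T) / ∑ y, p y ^ (1 / T)) *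
            Real.log ((p x ^ (1 / T) / ∑ y, p y ^ (1 / T)) / q₁ x)
          ≤ ∑ x, (p x ^ (1 / T) / ∑ y, p y ^ (1 / T)) *
            Real.log ((p x ^ (1 / T) / ∑ y, p y ^ (1 / T)) / q₂ x)) := by
  have hw : ∀ x, p x * Real.exp ((1 - T) / T * Real.log (p x) - b)
      = Real.exp (-b) * p x ^ (1 / T) := by
    intro x
    rw [Real.rpow_def_of_pos (hp x)]
    nth_rewrite 1 [← Real.exp_log (hp x)]
    rw [← Real.exp_add, ← Real.exp_add]
    congr 1
    field_simp
    ring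
  have hZ : 0 < ∑ y, p y ^ (1 / T) :=
    Finset.sum_pos (fun y _ => Real.rpow_pos_of_pos (hp y) _) Finset.univ_nonempty
  have hL : ∀ q : α → ℝ,
      ∑ x, p x * Real.exp ((1 - T) / T * Real.log (p x) - b) * Real.log (q x)
        = Real.exp (-b) * ∑ x, p x ^ (1 / T) * Real.log (q x) := by
    intro q
    rw [Finset.mul_sum]
    exact Finset.sum_congr rfl fun x _ => by rw [hw x, mul_assoc]
  rw [hL, hL]
  generalize (∑ y, p y ^ (1 / T)) = Z at hZ ⊢
  have hK : ∀ q : α → ℝ, (∀ x, 0 < q x) →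
      ∑ x, (p x ^ (1 / T) / Z) * Real.log ((p x ^ (1 / T) / Z) / q x)
        = ∑ x, (p x ^ (1 / T) / Z) * Real.log (p x ^ (1 / T) / Z)
          - (∑ x, p x ^ (1 / T) * Real.log (q x)) / Z := by
    intro q hq
    rw [Finset.sum_div, ← Finset.sum_sub_distrib]
    refine Finset.sum_congr rfl fun x _ => ?_
    rw [Real.log_div (div_pos (Real.rpow_pos_of_pos (hp x) _) hZ).ne' (hq x).ne']
    ring
  rw [hK q₁ hq₁, hK q₂ hq₂, neg_le_neg_iff, mul_le_mul_iff_right₀ (Real.exp_pos _),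
    sub_le_sub_iff_left, div_le_div_iff_of_pos_right hZ]
end

section
/- Let p be a strictly positive joint pmf on sequences x : Fin n → α (α a nonempty finite type, n ≥ 1), let T > 0, let b ∈ ℝ, and let b' : (i : Fin n) × (prefix of length i) → ℝ be any (finite-valued) baseline function on prefixes. Define w_T(x) = exp(((1-T)/T)·log p(x) - b) and the autoregressive LHTS loss over families q = (q_i(·|x_{<i}))_{i,prefix} of strictly positive conditional pmfs on α: L^{AR}(q) = -(1/n)·∑_{i} ∑_x p(x) · e^{-b'(i, x_{<i})} · w_T(x) · log q_i(x_i | x_{<i}). Then L^{AR} is a strictly proper loss: its unique global minimizer over such families is q_i(·|x_{<i}) = p_T(·|x_{<i}), the univariate conditionals of the temperature-scaled joint distribution p_T. -/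
lemma lhts_group {X W A : Type*} [Fintype X] [Fintype W] [Fintype A] [DecidableEq W]
    [DecidableEq A] (f : X → W) (s : X → A) (m : X → ℝ) (F : W → A → ℝ) :
    ∑ x, m x * F (f x) (s x) =
      ∑ w, ∑ a, (∑ x, if f x = w ∧ s x = a then m x else 0) * F w a := by
  simp_rw [Finset.sum_mul]
  have h : ∀ w, ∑ a, ∑ x, (if f x = w ∧ s x = a then m x else 0) * F w a
      = ∑ x, ∑ a, (if f x = w ∧ s x = a then m x else 0) * F w a :=
    fun w => Finset.sum_comm
  simp_rw [h]
  rw [Finset.sum_comm]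
  refine Finset.sum_congr rfl fun x _ => ?_
  rw [Finset.sum_eq_single (f x), Finset.sum_eq_single (s x)]
  · simp
  · intro a _ ha
    simp [ha.symm]
  · simp
  · intro w _ hw
    simp [hw.symm]
  · simp

lemma lhts_core {X W A : Type*} [Fintype X] [Fintype W] [Fintype A] [DecidableEq W]
    [DecidableEq A] (f : X → W) (s : X → A) (hs : ∀ w a, ∃ x, f x = w ∧ s x = a)
    (m : X → ℝ) (hm : ∀ x, 0 < m x) (c : W → ℝ) (hc : ∀ w, 0 < c w)
    (q : W → A → ℝ) (hq : ∀ w a, 0 < q w a) (hq1 : ∀ w, ∑ a, q w a = 1)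
    (r : W → A → ℝ)
    (hr : ∀ w a, r w a = (∑ x, if f x = w ∧ s x = a then m x else 0) /
        (∑ x, if f x = w then m x else 0)) :
    ∑ x, m x * (c (f x) * Real.log (q (f x) (s x))) ≤
      ∑ x, m x * (c (f x) * Real.log (r (f x) (s x))) ∧
    (∑ x, m x * (c (f x) * Real.log (q (f x) (s x))) =
      ∑ x, m x * (c (f x) * Real.log (r (f x) (s x))) → ∀ w a, q w a = r w a) := by
  have hN : ∀ w a, 0 < ∑ x, if f x = w ∧ s x = a then m x else 0 := by
    intro w a
    obtain ⟨x, hx⟩ := hs w a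
    refine Finset.sum_pos' (fun y _ => ?_) ⟨x, Finset.mem_univ _, ?_⟩
    · split_ifs
      · exact (hm y).le
      · exact le_rfl
    · rw [if_pos hx]; exact hm x
  have hsum : ∀ w, ∑ a, (∑ x, if f x = w ∧ s x = a then m x else 0)
      = ∑ x, if f x = w then m x else 0 := by
    intro w
    rw [Finset.sum_comm]
    refine Finset.sum_congr rfl fun x _ => ?_
    by_cases h : f x = w <;> simp [h]
  have hD : ∀ w, A → 0 < ∑ x, if f x = w then m x else 0 := by
    intro w a
    rw [← hsum]
    exact Finset.sum_pos (fun a _ => hN w a) ⟨a, Finset.mem_univ _⟩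
  have hrpos : ∀ w a, 0 < r w a := fun w a => by
    rw [hr]; exact div_pos (hN w a) (hD w a)
  -- pointwise gap
  have key : ∀ w a, 0 ≤ q w a / r w a - 1 - (Real.log (q w a) - Real.log (r w a)) := by
    intro w a
    rw [← Real.log_div (hq w a).ne' (hrpos w a).ne']
    linarith [Real.log_le_sub_one_of_pos (div_pos (hq w a) (hrpos w a))]
  have zero : ∑ x, m x * (c (f x) * (q (f x) (s x) / r (f x) (s x) - 1)) = 0 := by
    rw [lhts_group f s m (fun w a => c w * (q w a / r w a - 1))]
    refine Finset.sum_eq_zero fun w _ => ?_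
    have : ∀ a, (∑ x, if f x = w ∧ s x = a then m x else 0) * (c w * (q w a / r w a - 1))
        = c w * ((∑ x, if f x = w then m x else 0) * q w a
          - ∑ x, if f x = w ∧ s x = a then m x else 0) := by
      intro a
      have h1 := (hN w a).ne'
      have h2 := (hD w a).ne'
      rw [hr]
      field_simp
    simp_rw [this]
    rw [← Finset.mul_sum, Finset.sum_sub_distrib, ← Finset.mul_sum, hq1, hsum]
    ring
  have gap : ∑ x, m x * (c (f x) * Real.log (r (f x) (s x)))
      - ∑ x, m x * (c (f x) * Real.log (q (f x) (s x)))
      = ∑ x, m x * (c (f x) * (q (f x) (s x) / r (f x) (s x) - 1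
        - (Real.log (q (f x) (s x)) - Real.log (r (f x) (s x))))) := by
    rw [← Finset.sum_sub_distrib, ← zero_add (∑ x, (_ - _)), ← zero,
      ← Finset.sum_add_distrib]
    exact Finset.sum_congr rfl fun x _ => by ring
  have nn : ∀ x, 0 ≤ m x * (c (f x) * (q (f x) (s x) / r (f x) (s x) - 1
        - (Real.log (q (f x) (s x)) - Real.log (r (f x) (s x))))) := fun x =>
    mul_nonneg (hm x).le (mul_nonneg (hc _).le (key _ _))
  refine ⟨?_, fun he w a => ?_⟩
  · have := Finset.sum_nonneg (s := Finset.univ) fun x _ => nn x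
    linarith
  · rw [he, sub_self] at gap
    have h0 := (Finset.sum_eq_zero_iff_of_nonneg fun x _ => nn x).1 gap.symm
    obtain ⟨x, rfl, rfl⟩ := hs w a
    have h1 := h0 x (Finset.mem_univ _)
    have h2 := (mul_eq_zero.1 ((mul_eq_zero.1 h1).resolve_left (hm x).ne')).resolve_left
      (hc _).ne'
    rw [← Real.log_div (hq _ _).ne' (hrpos _ _).ne'] at h2
    by_contra hne
    have h3 : q (f x) (s x) / r (f x) (s x) ≠ 1 := by
      rw [Ne, div_eq_one_iff_eq (hrpos _ _).ne']
      exact hne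
    linarith [Real.log_lt_sub_one_of_pos (div_pos (hq (f x) (s x)) (hrpos (f x) (s x))) h3]

/-- **Strict properness of the autoregressive LHTS loss (Proposition 1).**
Let `p` be a strictly positive joint pmf on sequences `x : Fin n → α` (`α` nonempty
finite, `n ≥ 1`), `T > 0`, `b ∈ ℝ`, and let `b'` be any finite-valued baseline on
prefixes. With `w_T(x) = exp(((1-T)/T)·log p x - b)`, the autoregressive LHTS loss
`L^{AR}(q) = -(1/n)·∑ i, ∑ x, p x · e^{-b'(i,x_{<i})} · w_T(x) · log (q i x_{<i} (x i))`
over families `q` of strictly positive conditional pmfs on `α` is uniquely globally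
minimized at the family of univariate conditionals of the temperature-scaled joint
distribution `p_T x = p x ^ (1/T) / ∑ y, p y ^ (1/T)`, namely
`p_T(a | w) = (∑_{x : x_{<i} = w, x i = a} p_T x) / (∑_{x : x_{<i} = w} p_T x)`. -/
theorem lhts_autoregressive_strictly_proper
    {α : Type*} [Fintype α] [Nonempty α] [DecidableEq α] {n : ℕ} (hn : 1 ≤ n)
    (p : (Fin n → α) → ℝ) (hp : ∀ x, 0 < p x) (hp1 : ∑ x, p x = 1)
    (T : ℝ) (hT : 0 < T) (b : ℝ)
    (b' : (i : Fin n) → (Fin (i : ℕ) → α) → ℝ)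
    (q : (i : Fin n) → (Fin (i : ℕ) → α) → α → ℝ)
    (hq : ∀ i w a, 0 < q i w a) (hq1 : ∀ i w, ∑ a, q i w a = 1) :
    let pref : (Fin n → α) → (i : Fin n) → Fin (i : ℕ) → α :=
      fun x i j => x ⟨(j : ℕ), lt_trans j.isLt i.isLt⟩
    let pT : (Fin n → α) → ℝ := fun x => p x ^ (1 / T) / ∑ y, p y ^ (1 / T)
    let pTcond : (i : Fin n) → (Fin (i : ℕ) → α) → α → ℝ := fun i w a =>
      (∑ x, if pref x i = w ∧ x i = a then pT x else 0) /
        (∑ x, if pref x i = w then pT x else 0)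
    let L : ((i : Fin n) → (Fin (i : ℕ) → α) → α → ℝ) → ℝ := fun r =>
      -(1 / (n : ℝ)) * ∑ i, ∑ x,
        p x * Real.exp (-(b' i (pref x i))) *
          Real.exp ((1 - T) / T * Real.log (p x) - b) *
          Real.log (r i (pref x i) (x i))
    L pTcond ≤ L q ∧ (L q = L pTcond ↔ ∀ i w a, q i w a = pTcond i w a) := by
  intro pref pT pTcond L
  have hZ : 0 < ∑ y, p y ^ (1 / T) :=
    Finset.sum_pos (fun y _ => Real.rpow_pos_of_pos (hp y) _) Finset.univ_nonempty
  have hpT : ∀ x, 0 < pT x := fun x => div_pos (Real.rpow_pos_of_pos (hp x) _) hZ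
  have hw : ∀ x, p x * Real.exp ((1 - T) / T * Real.log (p x) - b)
      = pT x * ((∑ y, p y ^ (1 / T)) * Real.exp (-b)) := by
    intro x
    have h1 : pT x * ((∑ y, p y ^ (1 / T)) * Real.exp (-b))
        = p x ^ (1 / T) * Real.exp (-b) := by
      simp only [pT]
      field_simp
    rw [h1, Real.rpow_def_of_pos (hp x), ← Real.exp_add]
    nth_rw 1 [← Real.exp_log (hp x)]
    rw [← Real.exp_add]
    congr 1
    field_simp
    ring
  let c : (i : Fin n) → (Fin (i : ℕ) → α) → ℝ := fun i w =>
    Real.exp (-(b' i w)) * ((∑ y, p y ^ (1 / T)) * Real.exp (-b))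
  have hc : ∀ i w, 0 < c i w := fun i w =>
    mul_pos (Real.exp_pos _) (mul_pos hZ (Real.exp_pos _))
  have hL : ∀ r, L r = -(1 / (n : ℝ)) * ∑ i, ∑ x,
      pT x * (c i (pref x i) * Real.log (r i (pref x i) (x i))) := by
    intro r
    simp only [L]
    congr 1
    refine Finset.sum_congr rfl fun i _ => Finset.sum_congr rfl fun x _ => ?_
    rw [mul_right_comm (p x), hw]
    simp only [c]
    ring
  have hs : ∀ (i : Fin n) (w : Fin (i : ℕ) → α) (a : α), ∃ x, pref x i = w ∧ x i = a := by
    intro i w a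
    refine ⟨fun j => if h : (j : ℕ) < i then w ⟨j, h⟩ else a, ?_, ?_⟩
    · funext j
      exact dif_pos j.isLt
    · simp
  have core := fun i : Fin n => lhts_core (fun x => pref x i) (fun x => x i) (hs i) pT hpT
    (c i) (hc i) (q i) (hq i) (hq1 i) (pTcond i) (fun w a => rfl)
  have hn' : 0 < 1 / (n : ℝ) := by
    have : (0 : ℝ) < n := by exact_mod_cast hn
    positivity
  rw [hL, hL]
  refine ⟨?_, ?_, ?_⟩
  · have := Finset.sum_le_sum (s := Finset.univ) fun i _ => (core i).1
    have := mul_le_mul_of_nonneg_left this hn'.le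
    linarith
  · intro h i
    have h' := mul_left_cancel₀ (neg_ne_zero.2 hn'.ne') h
    have h2 := (Finset.sum_eq_sum_iff_of_le fun i _ => (core i).1).1 h'
    exact (core i).2 (h2 i (Finset.mem_univ _))
  · intro h
    have : q = pTcond := by
      funext i w a
      exact h i w a
    rw [this]
end

section
/- Let p be a strictly positive joint pmf on sequences x : Fin n → α (α a nonempty finite type, n ≥ 1), let T > 0, fix i : Fin n and a prefix w : Fin i → α. Then the weighted conditional loss q ↦ -∑_{x : x_{<i} = w} p(x_{≥i} | w) · exp(((1-T)/T)·log p(x_{≥i} | w)) · log q(x_i), taken over strictly positive pmfs q on α, is uniquely minimized at q = p_T(·|w), the conditional of the temperature-scaled joint distribution given the prefix w. -/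
theorem aux_gibbs {α : Type*} [Fintype α] (s q : α → ℝ) (hs : ∀ a, 0 < s a)
    (hs1 : ∑ a, s a = 1) (hq : ∀ a, 0 < q a) (hq1 : ∑ a, q a = 1) :
    ∑ a, s a * Real.log (q a) ≤ ∑ a, s a * Real.log (s a) ∧
    (∑ a, s a * Real.log (q a) = ∑ a, s a * Real.log (s a) → q = s) := by
  have key : ∀ a, 0 ≤ q a - s a - (s a * Real.log (q a) - s a * Real.log (s a)) := by
    intro a
    have h := Real.log_le_sub_one_of_pos (div_pos (hq a) (hs a))
    rw [Real.log_div (hq a).ne' (hs a).ne'] at h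
    have h2 := mul_le_mul_of_nonneg_left h (hs a).le
    have h3 : s a * (q a / s a - 1) = q a - s a := by
      have := (hs a).ne'
      field_simp
    rw [h3] at h2
    linarith
  have hsum : ∑ a, (q a - s a - (s a * Real.log (q a) - s a * Real.log (s a)))
      = ∑ a, s a * Real.log (s a) - ∑ a, s a * Real.log (q a) := by
    simp only [Finset.sum_sub_distrib, hs1, hq1]; ring
  constructor
  · have := Finset.sum_nonneg (fun a (_ : a ∈ Finset.univ) => key a)
    rw [hsum] at this
    linarith
  · intro h
    rw [h, sub_self, Finset.sum_eq_zero_iff_of_nonneg (fun a _ => key a)] at hsum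
    funext a
    have ha := hsum a (Finset.mem_univ a)
    by_contra hne
    have h1 : q a / s a ≠ 1 := by
      rw [Ne, div_eq_one_iff_eq (hs a).ne']; exact hne
    have h := Real.log_lt_sub_one_of_pos (div_pos (hq a) (hs a)) h1
    rw [Real.log_div (hq a).ne' (hs a).ne'] at h
    have h2 := mul_lt_mul_of_pos_left h (hs a)
    have h3 : s a * (q a / s a - 1) = q a - s a := by
      have := (hs a).ne'
      field_simp
    rw [h3] at h2
    linarith

theorem aux_core {X α : Type*} [Fintype X] [Fintype α] [Nonempty α] [DecidableEq α]
    (P : X → Prop) [DecidablePred P] (f : X → α) (hf : ∀ a, ∃ x, P x ∧ f x = a)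
    (c d : X → ℝ) (hc : ∀ x, 0 < c x) (K : ℝ) (hK : 0 < K) (hd : ∀ x, P x → d x = K * c x)
    (q : α → ℝ) (hq : ∀ a, 0 < q a) (hq1 : ∑ a, q a = 1) (s : α → ℝ)
    (hs : s = fun a => (∑ x, if P x ∧ f x = a then c x else 0) / (∑ x, if P x then c x else 0)) :
    (-∑ x, (if P x then d x * Real.log (s (f x)) else 0)) ≤
      (-∑ x, (if P x then d x * Real.log (q (f x)) else 0)) ∧
    ((-∑ x, (if P x then d x * Real.log (q (f x)) else 0)) =
      (-∑ x, (if P x then d x * Real.log (s (f x)) else 0)) ↔ q = s) := by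
  set S := ∑ x, if P x then c x else 0 with hS
  have hnum : ∀ a, 0 < ∑ x, if P x ∧ f x = a then c x else 0 := by
    intro a
    obtain ⟨x, hx⟩ := hf a
    refine Finset.sum_pos' (fun y _ => ?_) ⟨x, Finset.mem_univ x, ?_⟩
    · split_ifs
      exacts [(hc y).le, le_rfl]
    · rw [if_pos hx]; exact hc x
  have hfib : ∀ g : α → ℝ, ∑ x, (if P x then c x * g (f x) else 0) =
      ∑ a, (∑ x, if P x ∧ f x = a then c x else 0) * g a := by
    intro g
    simp only [Finset.sum_mul]
    rw [Finset.sum_comm]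
    refine Finset.sum_congr rfl fun x _ => ?_
    by_cases h : P x <;> simp [h, ite_mul]
  have hSsum : S = ∑ a, ∑ x, if P x ∧ f x = a then c x else 0 := by
    simpa using hfib (fun _ => 1)
  have hSpos : 0 < S := by
    rw [hSsum]; exact Finset.sum_pos (fun a _ => hnum a) Finset.univ_nonempty
  have hspos : ∀ a, 0 < s a := fun a => by rw [hs]; exact div_pos (hnum a) hSpos
  have hs1 : ∑ a, s a = 1 := by
    rw [hs, ← Finset.sum_div, ← hSsum, div_self hSpos.ne']
  have hL : ∀ r : α → ℝ, ∑ x, (if P x then d x * Real.log (r (f x)) else 0) =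
      K * S * ∑ a, s a * Real.log (r a) := by
    intro r
    have h1 : ∑ x, (if P x then d x * Real.log (r (f x)) else 0) =
        K * ∑ x, (if P x then c x * Real.log (r (f x)) else 0) := by
      rw [Finset.mul_sum]
      refine Finset.sum_congr rfl fun x _ => ?_
      by_cases h : P x
      · simp [h, hd x h, mul_assoc]
      · simp [h]
    rw [h1, hfib (fun a => Real.log (r a)), mul_assoc, Finset.mul_sum (a := S)]
    congr 1
    refine Finset.sum_congr rfl fun a _ => ?_
    rw [hs]
    have := hSpos.ne'
    field_simp
  obtain ⟨g1, g2⟩ := aux_gibbs s q hspos hs1 hq hq1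
  have hKS : 0 < K * S := mul_pos hK hSpos
  rw [hL s, hL q]
  refine ⟨neg_le_neg (mul_le_mul_of_nonneg_left g1 hKS.le), fun h => g2 ?_, fun h => by rw [h]⟩
  exact mul_left_cancel₀ hKS.ne' (neg_injective h)

/-- **The weighted conditional loss is uniquely minimized by the temperature-scaled
conditional.** Fix `i : Fin n` and a prefix `w : Fin i → α`. Over strictly positive
pmfs `q` on `α`, the loss
`q ↦ -∑_{x : x_{<i} = w} p(x_{≥i}|w) · exp(((1-T)/T)·log p(x_{≥i}|w)) · log (q (x i))`
(with `p(x_{≥i}|w) = p x / p w`, `p w = ∑_{x : x_{<i} = w} p x`) is uniquely minimized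
at `q = p_T(·|w)`, the conditional of the temperature-scaled joint distribution
`p_T x = p x ^ (1/T) / ∑ y, p y ^ (1/T)`, i.e.
`p_T(a|w) = (∑_{x : x_{<i} = w, x i = a} p_T x) / (∑_{x : x_{<i} = w} p_T x)`. -/
theorem lhts_weighted_conditional_loss_minimizer
    {α : Type*} [Fintype α] [Nonempty α] [DecidableEq α] {n : ℕ} (hn : 1 ≤ n)
    (p : (Fin n → α) → ℝ) (hp : ∀ x, 0 < p x) (hp1 : ∑ x, p x = 1)
    (T : ℝ) (hT : 0 < T) (i : Fin n) (w : Fin (i : ℕ) → α)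
    (q : α → ℝ) (hq : ∀ a, 0 < q a) (hq1 : ∑ a, q a = 1) :
    let pref : (Fin n → α) → Fin (i : ℕ) → α :=
      fun x j => x ⟨(j : ℕ), lt_trans j.isLt i.isLt⟩
    let pw : ℝ := ∑ x, if pref x = w then p x else 0
    let psuf : (Fin n → α) → ℝ := fun x => p x / pw
    let pT : (Fin n → α) → ℝ := fun x => p x ^ (1 / T) / ∑ y, p y ^ (1 / T)
    let qstar : α → ℝ := fun a =>
      (∑ x, if pref x = w ∧ x i = a then pT x else 0) /
        (∑ x, if pref x = w then pT x else 0)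
    let L : (α → ℝ) → ℝ := fun r =>
      -∑ x, (if pref x = w then
          psuf x * Real.exp ((1 - T) / T * Real.log (psuf x)) * Real.log (r (x i))
        else 0)
    L qstar ≤ L q ∧ (L q = L qstar ↔ q = qstar) := by

  intro pref pw psuf pT qstar L
  have hf : ∀ a, ∃ x, pref x = w ∧ x i = a := by
    intro a
    refine ⟨fun j => if h : (j : ℕ) < i then w ⟨j, h⟩ else a, ?_, by simp⟩
    funext j
    exact dif_pos j.isLt
  obtain ⟨a0⟩ := ‹Nonempty α›
  have : Nonempty α := ⟨a0⟩
  obtain ⟨x0, hx0, -⟩ := hf a0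
  have hpw : 0 < pw := by
    refine Finset.sum_pos' (fun y _ => ?_) ⟨x0, Finset.mem_univ _, ?_⟩
    · split_ifs
      exacts [(hp y).le, le_rfl]
    · rw [if_pos hx0]; exact hp x0
  have hZ : 0 < ∑ y, p y ^ (1 / T) :=
    Finset.sum_pos (fun y _ => Real.rpow_pos_of_pos (hp y) _) ⟨x0, Finset.mem_univ _⟩
  refine aux_core (fun x => pref x = w) (fun x => x i) hf pT
    (fun x => psuf x * Real.exp ((1 - T) / T * Real.log (psuf x)))
    (fun x => div_pos (Real.rpow_pos_of_pos (hp x) _) hZ)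
    ((∑ y, p y ^ (1 / T)) / pw ^ (1 / T)) (div_pos hZ (Real.rpow_pos_of_pos hpw _))
    (fun x _ => ?_) q hq hq1 qstar rfl
  have hps : 0 < psuf x := div_pos (hp x) hpw
  have h1 : psuf x * Real.exp ((1 - T) / T * Real.log (psuf x)) = psuf x ^ (1 / T) := by
    rw [Real.rpow_def_of_pos hps]
    nth_rewrite 1 [← Real.exp_log hps]
    rw [← Real.exp_add]
    congr 1
    field_simp
    ring
  have h2 : psuf x ^ (1 / T) = p x ^ (1 / T) / pw ^ (1 / T) :=
    Real.div_rpow (hp x).le hpw.le _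
  change psuf x * Real.exp ((1 - T) / T * Real.log (psuf x)) =
    (∑ y, p y ^ (1 / T)) / pw ^ (1 / T) * (p x ^ (1 / T) / ∑ y, p y ^ (1 / T))
  rw [h1, h2]
  have h3 := (Real.rpow_pos_of_pos hpw (1 / T)).ne'
  have h4 := hZ.ne'
  generalize (∑ y, p y ^ (1 / T)) = Z at *
  generalize pw ^ (1 / T) = W at *
  field_simp
end

section
/- Let p be a strictly positive pmf on a nonempty finite type α with a unique maximizer x* (i.e., p(x*) > p(x) for all x ≠ x*). Then as the temperature tends to 0 from above, the temperature-scaled distribution concentrates on the argmax: the function T ↦ p(x*)^{1/T} / ∑_y p(y)^{1/T} tends to 1 as T → 0⁺. -/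
open Filter Topology

/-- **Temperature → 0 concentrates on the argmax.** Let `p` be a strictly positive pmf
on a nonempty finite type with a unique maximizer `x*`. Then
`p_T(x*) = p(x*)^(1/T) / ∑ y, p(y)^(1/T) → 1` as `T → 0⁺`. -/
theorem temp_scaled_tendsto_argmax
    {α : Type*} [Fintype α] [Nonempty α]
    (p : α → ℝ) (hp : ∀ x, 0 < p x) (hp1 : ∑ x, p x = 1)
    (xstar : α) (hmax : ∀ x, x ≠ xstar → p x < p xstar) :
    Tendsto (fun T : ℝ => p xstar ^ (1 / T) / ∑ y, p y ^ (1 / T))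
      (𝓝[>] 0) (𝓝 1) := by
  classical
  have key : Tendsto (fun T : ℝ => ∑ y, (p y / p xstar) ^ (1 / T)) (𝓝[>] 0)
      (𝓝 (∑ y, if y = xstar then (1 : ℝ) else 0)) := by
    refine tendsto_finsetSum _ fun y _ => ?_
    by_cases h : y = xstar
    · subst h
      simp [div_self (hp y).ne']
    · simp only [h, if_false]
      have h1 : p y / p xstar < 1 := (div_lt_one (hp xstar)).2 (hmax y h)
      have h0 : 0 < p y / p xstar := div_pos (hp y) (hp xstar)
      have ht : Tendsto (fun T : ℝ => 1 / T) (𝓝[>] 0) atTop := by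
        simpa using tendsto_inv_nhdsGT_zero (𝕜 := ℝ)
      exact (tendsto_rpow_atTop_of_base_lt_one _ (by linarith) h1).comp ht
  have h2 := key.inv₀ (by simp)
  simp only [Finset.sum_ite_eq', Finset.mem_univ, if_true, inv_one] at h2
  refine h2.congr fun T => ?_
  have e : ∀ y, (p y / p xstar) ^ (1 / T) = p y ^ (1 / T) / p xstar ^ (1 / T) :=
    fun y => Real.div_rpow (hp y).le (hp xstar).le _
  simp only [e]
  rw [← Finset.sum_div, inv_div]
end
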